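/- Let λ be a partition of d. If (i,j) and (i',j') are pairs in I(n,d) × I(n,d) lying in the same orbit of the diagonal S_d-action, then #{w ∈ S_d : w has cycle type λ and w • j = i} = #{w ∈ S_d : w has cycle type λ and w • j' = i'}. Consequently, for D ∈ M(n,d), the number c_{λ,D} := #{w ∈ S_d : cycle type of w is λ and w • j = i}, computed for any (i,j) with D(i,j) = D, is well defined. -/

import Mathlib

/-!
Conjugation by `u` preserves cycle type, and `w • j = i` holds exactly when
`(u w u⁻¹) • (u • j) = u • i`; hence conjugation is a bijection between the two sets of permutations
attached to `(i,j)` and to `(u • i, u • j)` (`card_transporter_permAct`). The count depends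
only on `D(i,j)` because pairs with equal matrices lie in one orbit
(`exists_permAct_of_Dmat_eq`).
-/

open Finset

noncomputable section

/-- The action of `S_d` on `I(n,d) = Fin d → Fin n`, `w • i = i ∘ w⁻¹`. -/
def permAct {n d : ℕ} (w : Equiv.Perm (Fin d)) (i : Fin d → Fin n) : Fin d → Fin n :=
  i ∘ ⇑w⁻¹

/-- The matrix `D(i,j)` with `(a,b)` entry `#{k | i k = a ∧ j k = b}`. -/
def Dmat {n d : ℕ} (i j : Fin d → Fin n) : Matrix (Fin n) (Fin n) ℕ :=
  fun a b => (Finset.univ.filter (fun k => i k = a ∧ j k = b)).card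

/-- `w ∈ S_d` has cycle type the partition `λ` of `d` (fixed points counted as
`1`-cycles). -/
def HasCycleType {d : ℕ} (w : Equiv.Perm (Fin d)) (lam : Nat.Partition d) : Prop :=
  w.partition.parts = lam.parts

/-- The action is a left action. -/
theorem permAct_mul {n d : ℕ} (v w : Equiv.Perm (Fin d)) (i : Fin d → Fin n) :
    permAct (v * w) i = permAct v (permAct w i) := by
  funext k
  simp [permAct, mul_inv_rev]

theorem hasCycleType_conj {d : ℕ} (u w : Equiv.Perm (Fin d)) (lam : Nat.Partition d) :
    HasCycleType (u * w * u⁻¹) lam ↔ HasCycleType w lam := by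
  have h : (u * w * u⁻¹).partition = w.partition :=
    Equiv.Perm.partition_eq_of_isConj.mp (isConj_iff.mpr ⟨u, rfl⟩).symm
  simp only [HasCycleType, h]

theorem permAct_conj_iff {n d : ℕ} (u w : Equiv.Perm (Fin d)) (i j : Fin d → Fin n) :
    permAct (u * w * u⁻¹) (permAct u j) = permAct u i ↔ permAct w j = i := by
  rw [← permAct_mul, inv_mul_cancel_right, permAct_mul]
  exact (Function.Surjective.injective_comp_right (u⁻¹ : Equiv.Perm (Fin d)).surjective).eq_iff

/-- Conjugation by `u` matches the two sets of permutations being counted. -/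
theorem card_transporter_permAct {n d : ℕ} (lam : Nat.Partition d) (u : Equiv.Perm (Fin d))
    (i j : Fin d → Fin n) :
    Nat.card {w : Equiv.Perm (Fin d) // HasCycleType w lam ∧ permAct w j = i}
      = Nat.card {w : Equiv.Perm (Fin d) //
          HasCycleType w lam ∧ permAct w (permAct u j) = permAct u i} :=
  Nat.card_congr ((MulAut.conj u).toEquiv.subtypeEquiv fun w =>
    (and_congr (hasCycleType_conj u w lam) (permAct_conj_iff u w i j)).symm)

/-- Pairs with the same matrix lie in the same orbit: the entries of `D(i,j)` are the sizes of the
fibres of `k ↦ (i k, j k)`, so equal matrices allow the fibres to be matched bijectively. -/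
theorem exists_permAct_of_Dmat_eq {n d : ℕ} (i j i' j' : Fin d → Fin n)
    (h : Dmat i j = Dmat i' j') :
    ∃ u : Equiv.Perm (Fin d), permAct u i = i' ∧ permAct u j = j' := by
  have hfib : ∀ p : Fin n × Fin n,
      Nonempty ({k // (i' k, j' k) = p} ≃ {k // (i k, j k) = p}) := by
    rintro ⟨a, b⟩
    refine ⟨Fintype.equivOfCardEq ?_⟩
    simpa [Fintype.card_subtype, Dmat, eq_comm] using (congrFun (congrFun h a) b).symm
  let e := fun p => (hfib p).some
  let v : Equiv.Perm (Fin d) := Equiv.ofFiberEquiv e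
  have hv : ∀ k, (i (v k), j (v k)) = (i' k, j' k) :=
    fun k => Equiv.ofFiberEquiv_map (g := fun k => (i k, j k)) e k
  refine ⟨v⁻¹, funext fun k => ?_, funext fun k => ?_⟩
  · simpa [permAct] using congrArg Prod.fst (hv k)
  · simpa [permAct] using congrArg Prod.snd (hv k)

/-- If `(i,j)` and `(i',j')` lie in the same orbit of the diagonal `S_d`-action, then the
number of permutations of cycle type `λ` taking `j` to `i` equals the number taking `j'`
to `i'`; consequently the count `c_{λ,D}` is well defined, depending only on `D(i,j)`. -/
theorem card_cycleType_transporter_orbit_invariant (n d : ℕ) (hn : 0 < n) (hd : 0 < d)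
    (lam : Nat.Partition d) :
    (∀ i j i' j' : Fin d → Fin n,
      (∃ w : Equiv.Perm (Fin d), (permAct w i, permAct w j) = (i', j')) →
        Nat.card {w : Equiv.Perm (Fin d) // HasCycleType w lam ∧ permAct w j = i}
          = Nat.card {w : Equiv.Perm (Fin d) // HasCycleType w lam ∧ permAct w j' = i'})
    ∧ (∀ i j i' j' : Fin d → Fin n, Dmat i j = Dmat i' j' →
        Nat.card {w : Equiv.Perm (Fin d) // HasCycleType w lam ∧ permAct w j = i}
          = Nat.card {w : Equiv.Perm (Fin d) // HasCycleType w lam ∧ permAct w j' = i'}) := by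
  have key : ∀ i j i' j' : Fin d → Fin n,
      (∃ u : Equiv.Perm (Fin d), permAct u i = i' ∧ permAct u j = j') →
        Nat.card {w : Equiv.Perm (Fin d) // HasCycleType w lam ∧ permAct w j = i}
          = Nat.card {w : Equiv.Perm (Fin d) // HasCycleType w lam ∧ permAct w j' = i'} := by
    rintro i j _ _ ⟨u, rfl, rfl⟩
    exact card_transporter_permAct lam u i j
  exact ⟨fun i j i' j' ⟨u, hu⟩ => key i j i' j' ⟨u, Prod.mk.inj hu⟩,
    fun i j i' j' h => key i j i' j' (exists_permAct_of_Dmat_eq i j i' j' h)⟩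

end
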